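/- Let C be a skew cyclic code of length s over R₄ and suppose C contains no monic skew polynomial. Then C = ⟨2q(x)⟩ as a left R₄[x,θ₄]-submodule of R₄[x,θ₄]/⟨x^s−1⟩, for some skew polynomial q(x) whose mod-2 reduction is a right divisor of x^s−1 in R₂[x,θ₂]. -/

import Mathlib

set_option synthInstance.maxHeartbeats 1000000
set_option maxHeartbeats 2000000

noncomputable section
open Polynomial

abbrev Z4 : Type := ZMod 4
abbrev Z2 : Type := ZMod 2

/-- The mod 2 reduction map `Z₄ → Z₂`. -/
def bar : Z4 →+* Z2 := ZMod.castHom (m := 2) (by norm_num) Z2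

/-- The ring `R₄ = Z₄[x]/⟨h⟩` (for `h` basic primitive, the Galois ring `GR(4,m)`). -/
abbrev R4 (h : Z4[X]) : Type := Z4[X] ⧸ Ideal.span {h}

/-- The ring `R₂ = Z₂[x]/⟨h̄⟩` (for `h` basic primitive, the field `F_{2^m}`). -/
abbrev R2 (h : Z4[X]) : Type := Z2[X] ⧸ Ideal.span {h.map bar}

/-- `ξ`, the class of `x` in `R₄`. -/
def xi (h : Z4[X]) : R4 h := Ideal.Quotient.mk _ X

/-- `ξ̄`, the class of `x` in `R₂`. -/
def xibar (h : Z4[X]) : R2 h := Ideal.Quotient.mk _ X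

/-- The coefficientwise mod 2 reduction `R₄ → R₂`. -/
def barR (h : Z4[X]) : R4 h →+* R2 h :=
  Ideal.quotientMap (Ideal.span {h.map bar}) (Polynomial.mapRingHom bar)
    (by
      rw [Ideal.span_le]
      intro p hp
      simp only [Set.mem_singleton_iff] at hp
      subst hp
      exact Ideal.mem_comap.mpr (Ideal.subset_span (by simp)))

/-- The canonical representative (of degree `< deg h`) of an element of `R₄`. -/
def rep4 (h : Z4[X]) (α : R4 h) : Z4[X] := Quotient.out α %ₘ h

/-- The canonical representative (of degree `< deg h̄`) of an element of `R₂`. -/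
def rep2 (h : Z4[X]) (α : R2 h) : Z2[X] := Quotient.out α %ₘ (h.map bar)

/-- The Frobenius map `θ₄ : ∑ vᵢ ξ^i ↦ ∑ vᵢ ξ^{2i}` of `R₄`, as a bare function:
substitute `ξ²` in the canonical representative. -/
def thetaFun4 (h : Z4[X]) (α : R4 h) : R4 h := Polynomial.aeval (xi h ^ 2) (rep4 h α)

/-- The Frobenius map `θ₂ : ∑ vᵢ ξ̄^i ↦ ∑ vᵢ ξ̄^{2i}` of `R₂`, as a bare function. -/
def thetaFun2 (h : Z4[X]) (α : R2 h) : R2 h := Polynomial.aeval (xibar h ^ 2) (rep2 h α)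

/-- A lift `ι : R₂ → R₄` with `ι` mod 2 the identity: lift the coefficients of the
canonical representative from `{0,1}`. -/
def iota (h : Z4[X]) (α : R2 h) : R4 h :=
  Ideal.Quotient.mk _ ((rep2 h α).sum fun i a => C ((a.val : Z4)) * X ^ i)

/-- `h` is a monic basic primitive polynomial of degree `m`:  `h` is monic, its mod 2
reduction `h̄` is irreducible over `Z₂`, and the root `ξ̄` of `h̄` is a primitive
element, i.e. has multiplicative order `2^m - 1`. -/
def BasicPrimitive (h : Z4[X]) (m : ℕ) : Prop :=
  h.Monic ∧ h.natDegree = m ∧ Irreducible (h.map bar) ∧ orderOf (xibar h) = 2 ^ m - 1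

/-- The scalar multiplication `γ * (α,β) = (γ̄α, γβ)` making `R₂^r × R₄^s` (or any
mixed-alphabet tuple space) an `R₄`-module. -/
def smulStar (h : Z4[X]) {α β : Type*} (γ : R4 h) (v : (α → R2 h) × (β → R4 h)) :
    (α → R2 h) × (β → R4 h) :=
  (fun i => barR h γ * v.1 i, fun j => γ * v.2 j)

/-! ### Skew polynomial rings -/

/-- The additive endomorphism `p(x) ↦ pᶿ(x)·x` of `A[x]` (the twisted shift). -/
def Tmap {A : Type*} [CommRing A] (θ : A →+* A) : AddMonoid.End (Polynomial A) :=
  (AddMonoidHom.mulRight (X : Polynomial A)).comp (Polynomial.mapRingHom θ).toAddMonoidHom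

/-- Left multiplication by the constant `a`, as an additive endomorphism of `A[x]`. -/
def Lmap {A : Type*} [CommRing A] (a : A) : AddMonoid.End (Polynomial A) :=
  AddMonoidHom.mulLeft (C a)

/-- The skew polynomial ring `A[x;θ]`, realized as the subring of additive
endomorphisms of `A[x]` generated by the constants (acting by left multiplication)
and the twisted shift `Tmap θ`.  In this model multiplication is composition, so
`(a·xᵏ)·(b·xʲ) = a θᵏ(b) x^{k+j}`, i.e. `x·a = θ(a)·x`. -/
def SkewPolySubring (A : Type*) [CommRing A] (θ : A →+* A) :
    Subring (AddMonoid.End (Polynomial A)) :=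
  Subring.closure ((Set.range (Lmap (A := A))) ∪ {Tmap θ})

/-- The skew polynomial ring `A[x;θ]` as a type. -/
abbrev Skew (A : Type*) [CommRing A] (θ : A →+* A) : Type _ := SkewPolySubring A θ

/-- The element `x` of `A[x;θ]`. -/
def xSkew (A : Type*) [CommRing A] (θ : A →+* A) : Skew A θ :=
  ⟨Tmap θ, Subring.subset_closure (Set.mem_union_right _ rfl)⟩

/-- The constant `a` as an element of `A[x;θ]`. -/
def cSkew {A : Type*} [CommRing A] (θ : A →+* A) (a : A) : Skew A θ :=
  ⟨Lmap a, Subring.subset_closure (Set.mem_union_left _ ⟨a, rfl⟩)⟩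

/-- The skew polynomial `∑ aᵢ xⁱ ∈ A[x;θ]` attached to coefficient data `p = ∑ aᵢ Xⁱ`. -/
def ofPoly {A : Type*} [CommRing A] (θ : A →+* A) (p : Polynomial A) : Skew A θ :=
  p.sum fun i a => cSkew θ a * xSkew A θ ^ i

/-- The coefficient data of a skew polynomial, recovered by applying the
endomorphism to the polynomial `1`. -/
def toPoly {A : Type*} [CommRing A] {θ : A →+* A} (f : Skew A θ) : Polynomial A :=
  (f : AddMonoid.End (Polynomial A)) 1

/-- `g |ᵣ p` : `g` is a right divisor of `p` in `A[x;θ]`, i.e. `p = u·g`. -/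
def RDvd {A : Type*} [CommRing A] {θ : A →+* A} (g p : Skew A θ) : Prop :=
  ∃ u : Skew A θ, p = u * g

/-- The left ideal `⟨x^n - 1⟩` of `A[x;θ]`. -/
def skewIdeal (A : Type*) [CommRing A] (θ : A →+* A) (n : ℕ) :
    Submodule (Skew A θ) (Skew A θ) :=
  Submodule.span (Skew A θ) {xSkew A θ ^ n - 1}

/-- The quotient left `A[x;θ]`-module `A[x;θ]/⟨x^n-1⟩`. -/
abbrev SkewQuot (A : Type*) [CommRing A] (θ : A →+* A) (n : ℕ) : Type _ :=
  Skew A θ ⧸ skewIdeal A θ n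

/-- The polynomial `c₀ + c₁X + ⋯ + c_{n-1}X^{n-1}` attached to a word `c ∈ Aⁿ`. -/
def wordPoly {A : Type*} [CommRing A] {n : ℕ} (c : Fin n → A) : Polynomial A :=
  ∑ i : Fin n, C (c i) * X ^ (i : ℕ)

/-- Identify the word `c ∈ Aⁿ` with the class of `∑ cᵢ xⁱ` in `A[x;θ]/⟨x^n-1⟩`. -/
def wordToQuot {A : Type*} [CommRing A] (θ : A →+* A) {n : ℕ} (c : Fin n → A) :
    SkewQuot A θ n :=
  Submodule.Quotient.mk (ofPoly θ (wordPoly c))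

/-- A linear code of length `n` over `A`: an `A`-submodule of `Aⁿ`, as a set. -/
def IsLinearCode (A : Type*) [CommRing A] {n : ℕ} (C : Set (Fin n → A)) : Prop :=
  0 ∈ C ∧ (∀ u ∈ C, ∀ v ∈ C, u + v ∈ C) ∧ ∀ γ : A, ∀ u ∈ C, γ • u ∈ C

/-- The `θ`-cyclic shift `(c₀,…,c_{n-1}) ↦ (θ(c_{n-1}),θ(c₀),…,θ(c_{n-2}))`. -/
def skewShift {A : Type*} [CommRing A] (θ : A →+* A) {n : ℕ} [NeZero n]
    (c : Fin n → A) : Fin n → A :=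
  fun i => θ (c (i - 1))

/-! ### Basic facts on `ofPoly` -/

section General
variable {A : Type*} [CommRing A] (θ : A →+* A)

lemma my_cSkew_add (a b : A) : cSkew θ (a + b) = cSkew θ a + cSkew θ b := by
  apply Subtype.ext
  apply DFunLike.ext
  intro p
  change C (a + b) * p = C a * p + C b * p
  rw [C_add, add_mul]

lemma my_cSkew_zero : cSkew θ (0 : A) = 0 := by
  apply Subtype.ext
  apply DFunLike.ext
  intro p
  change C (0 : A) * p = 0
  rw [C_0, zero_mul]

lemma my_cSkew_mul (a b : A) : cSkew θ (a * b) = cSkew θ a * cSkew θ b := by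
  apply Subtype.ext
  apply DFunLike.ext
  intro p
  change C (a * b) * p = C a * (C b * p)
  rw [C_mul, mul_assoc]

lemma my_cSkew_one : cSkew θ (1 : A) = 1 := by
  apply Subtype.ext
  apply DFunLike.ext
  intro p
  change C (1 : A) * p = p
  rw [C_1, one_mul]

lemma my_x_c (a : A) : xSkew A θ * cSkew θ a = cSkew θ (θ a) * xSkew A θ := by
  apply Subtype.ext
  apply DFunLike.ext
  intro p
  change (C a * p).map θ * X = C (θ a) * (p.map θ * X)
  rw [Polynomial.map_mul, map_C, mul_assoc]

lemma my_ofPoly_add (p q : A[X]) : ofPoly θ (p + q) = ofPoly θ p + ofPoly θ q := by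
  unfold ofPoly
  apply Polynomial.sum_add_index
  · intro i; rw [my_cSkew_zero, zero_mul]
  · intro i a b; rw [my_cSkew_add, add_mul]

lemma my_ofPoly_zero : ofPoly θ (0 : A[X]) = 0 := by
  simp [ofPoly]

lemma my_ofPoly_neg (p : A[X]) : ofPoly θ (-p) = - ofPoly θ p := by
  rw [eq_neg_iff_add_eq_zero, ← my_ofPoly_add, neg_add_cancel, my_ofPoly_zero]

lemma my_ofPoly_sub (p q : A[X]) : ofPoly θ (p - q) = ofPoly θ p - ofPoly θ q := by
  rw [sub_eq_add_neg, my_ofPoly_add, my_ofPoly_neg, sub_eq_add_neg]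

lemma my_ofPoly_monomial (n : ℕ) (a : A) :
    ofPoly θ (C a * X ^ n) = cSkew θ a * xSkew A θ ^ n := by
  unfold ofPoly
  rw [C_mul_X_pow_eq_monomial]
  apply Polynomial.sum_monomial_index
  rw [my_cSkew_zero, zero_mul]

lemma my_ofPoly_L (a : A) (p : A[X]) : ofPoly θ (C a * p) = cSkew θ a * ofPoly θ p := by
  induction p using Polynomial.induction_on' with
  | add p q hp hq => rw [mul_add, my_ofPoly_add, hp, hq, my_ofPoly_add, mul_add]
  | monomial n b =>
    rw [← C_mul_X_pow_eq_monomial, ← mul_assoc, ← C_mul, my_ofPoly_monomial, my_ofPoly_monomial,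
      my_cSkew_mul, mul_assoc]

lemma my_ofPoly_T (p : A[X]) : ofPoly θ (p.map θ * X) = xSkew A θ * ofPoly θ p := by
  induction p using Polynomial.induction_on' with
  | add p q hp hq =>
    rw [Polynomial.map_add, add_mul, my_ofPoly_add, hp, hq, my_ofPoly_add, mul_add]
  | monomial n b =>
    rw [← C_mul_X_pow_eq_monomial, Polynomial.map_mul, Polynomial.map_pow, map_C, map_X,
      mul_assoc, ← pow_succ, my_ofPoly_monomial, my_ofPoly_monomial, ← mul_assoc, my_x_c,
      mul_assoc, ← pow_succ']

lemma my_ofPoly_X_pow_sub_one (n : ℕ) : ofPoly θ (X ^ n - 1) = xSkew A θ ^ n - 1 := by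
  have h1 := my_ofPoly_monomial θ n 1
  have h2 := my_ofPoly_monomial θ 0 1
  simp only [C_1, one_mul, pow_zero, mul_one, my_cSkew_one] at h1 h2
  rw [my_ofPoly_sub, h1, h2]

/-- A set stable under addition, constants and `x` is stable under all skew polynomials. -/
lemma my_smul_induction (P : AddSubgroup (Skew A θ))
    (hL : ∀ a : A, ∀ f ∈ P, cSkew θ a * f ∈ P) (hT : ∀ f ∈ P, xSkew A θ * f ∈ P)
    (r : Skew A θ) : ∀ f ∈ P, r * f ∈ P := by
  obtain ⟨r, hr⟩ := r
  unfold SkewPolySubring at hr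
  induction hr using Subring.closure_induction with
  | mem x hx =>
    rcases hx with ⟨a, rfl⟩ | rfl
    · exact hL a
    · exact hT
  | zero => intro f hf; convert P.zero_mem using 1; exact zero_mul f
  | one => intro f hf; convert hf using 1; exact one_mul f
  | add x y hx hy ihx ihy =>
    intro f hf
    convert P.add_mem (ihx f hf) (ihy f hf) using 1
    exact add_mul (⟨x, hx⟩ : Skew A θ) ⟨y, hy⟩ f
  | neg x hx ihx =>
    intro f hf
    convert P.neg_mem (ihx f hf) using 1
    exact neg_mul (⟨x, hx⟩ : Skew A θ) f
  | mul x y hx hy ihx ihy =>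
    intro f hf
    convert ihx _ (ihy f hf) using 1
    exact mul_assoc (⟨x, hx⟩ : Skew A θ) ⟨y, hy⟩ f

/-- Division with remainder: left ideals are generated by a minimal monic element. -/
lemma my_division (hA : ∀ a : A, a ≠ 0 → ∃ b, b * a = 1)
    (J N : AddSubgroup A[X])
    (hJL : ∀ a : A, ∀ f ∈ J, C a * f ∈ J) (hJT : ∀ f ∈ J, f.map θ * X ∈ J)
    (hNL : ∀ a : A, ∀ f ∈ N, C a * f ∈ N) (hNT : ∀ f ∈ N, f.map θ * X ∈ N)
    (g : A[X]) (hg : g ∈ J) (hgm : g.Monic) (hgN : g ∈ N)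
    (hmin : ∀ f ∈ J, f.Monic → g.natDegree ≤ f.natDegree) : J ≤ N := by
  rcases subsingleton_or_nontrivial A with hs | hs
  · intro f _
    rw [Subsingleton.elim f 0]; exact N.zero_mem
  have key : ∀ k : ℕ, ∃ t ∈ J, t ∈ N ∧ t.Monic ∧ t.natDegree = g.natDegree + k := by
    intro k
    induction k with
    | zero => exact ⟨g, hg, hgN, hgm, rfl⟩
    | succ k ih =>
      obtain ⟨t, h1, h2, h3, h4⟩ := ih
      refine ⟨t.map θ * X, hJT t h1, hNT t h2, (h3.map θ).mul monic_X, ?_⟩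
      rw [(h3.map θ).natDegree_mul monic_X, h3.natDegree_map, h4, natDegree_X, add_assoc]
  have main : ∀ n : ℕ, ∀ f ∈ J, f.degree < (n : WithBot ℕ) → f ∈ N := by
    intro n
    induction n with
    | zero =>
      intro f _ hd
      have : f = 0 := by
        rw [← degree_eq_bot]
        simpa [Nat.WithBot.lt_zero_iff] using hd
      rw [this]; exact N.zero_mem
    | succ n ih =>
      intro f hf hd
      by_cases hf0 : f = 0
      · rw [hf0]; exact N.zero_mem
      have hl : f.leadingCoeff ≠ 0 := by simpa using hf0
      obtain ⟨b, hb⟩ := hA _ hl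
      have hbm : (C b * f).Monic := by
        rw [Monic, leadingCoeff_mul', leadingCoeff_C, hb]
        rw [leadingCoeff_C, hb]; exact one_ne_zero
      have hle := hmin _ (hJL b f hf) hbm
      have hle : g.natDegree ≤ f.natDegree := hle.trans (natDegree_C_mul_le b f)
      obtain ⟨t, h1, h2, h3, h4⟩ := key (f.natDegree - g.natDegree)
      rw [Nat.add_sub_cancel' hle] at h4
      have hlt : (f - C f.leadingCoeff * t).degree < f.degree := by
        have hlc : (C f.leadingCoeff * t).leadingCoeff = f.leadingCoeff := by
          rw [leadingCoeff_mul_monic h3, leadingCoeff_C]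
        apply degree_sub_lt_left _ hf0 hlc.symm
        rw [h3.degree_mul, degree_C hl, zero_add, degree_eq_natDegree hf0,
          degree_eq_natDegree h3.ne_zero, h4]
      have hn : (f - C f.leadingCoeff * t).degree < (n : WithBot ℕ) := by
        refine lt_of_lt_of_le hlt ?_
        rw [degree_eq_natDegree hf0] at hd ⊢
        have hd : f.natDegree < n + 1 := by exact_mod_cast hd
        exact_mod_cast Nat.lt_succ_iff.mp hd
      have := N.add_mem (ih _ (J.sub_mem hf (hJL _ t h1)) hn) (hNL f.leadingCoeff t h2)
      simpa using this
  intro f hf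
  refine main (f.natDegree + 1) f hf ?_
  refine lt_of_le_of_lt degree_le_natDegree ?_
  exact_mod_cast Nat.lt_succ_self _

lemma my_wordPoly_coeff {n : ℕ} (c : Fin n → A) (i : Fin n) : (wordPoly c).coeff i = c i := by
  simp [wordPoly, coeff_X_pow, Fin.val_inj]

lemma my_wordPoly_natDegree {n : ℕ} (c : Fin n → A) : (wordPoly c).natDegree ≤ n - 1 := by
  unfold wordPoly
  apply natDegree_sum_le_of_forall_le
  intro i _
  exact (natDegree_C_mul_X_pow_le _ _).trans (by omega)

lemma my_wordPoly_add {n : ℕ} (c d : Fin n → A) :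
    wordPoly (c + d) = wordPoly c + wordPoly d := by
  simp [wordPoly, add_mul, Finset.sum_add_distrib]

lemma my_wordPoly_smul {n : ℕ} (a : A) (c : Fin n → A) :
    wordPoly (a • c) = C a * wordPoly c := by
  simp [wordPoly, Finset.mul_sum, mul_assoc]

lemma my_wordPoly_shift {n : ℕ} [NeZero n] (c : Fin n → A) :
    ∃ a : A, (wordPoly c).map θ * X = wordPoly (skewShift θ c) + C a * (X ^ n - 1) := by
  obtain _ | t := n
  · exact absurd rfl (NeZero.ne 0)
  refine ⟨θ (c (Fin.last t)), ?_⟩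
  have h0 : skewShift θ c 0 = θ (c (Fin.last t)) := by
    unfold skewShift
    congr 2
    rw [sub_eq_iff_eq_add]
    simp
  have h1 : ∀ i : Fin t, skewShift θ c i.succ = θ (c i.castSucc) := by
    intro i
    unfold skewShift
    congr 2
    simp [sub_eq_iff_eq_add]
  unfold wordPoly
  rw [Fin.sum_univ_castSucc, Fin.sum_univ_succ (n := t)]
  simp only [h0, h1, Polynomial.map_add, Polynomial.map_sum, Polynomial.map_mul, map_C,
    Polynomial.map_pow, map_X, Fin.val_succ, Fin.val_castSucc, Fin.val_last, Fin.val_zero, add_mul,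
    Finset.sum_mul, pow_succ]
  simp only [mul_assoc]
  ring

lemma my_top_unit {n : ℕ} [NeZero n] (D : Set (Fin n → A)) (hlin : IsLinearCode A D)
    (hcyc : ∀ c ∈ D, skewShift θ c ∈ D) (hno : ¬ ∃ c ∈ D, (wordPoly c).Monic) :
    ∀ k : ℕ, ∀ c ∈ D, ∀ i : Fin n, (i : ℕ) + k = n - 1 → ¬ ∃ u, u * c i = 1 := by
  intro k
  induction k with
  | zero =>
    rintro c hc i hi ⟨u, hu⟩
    refine hno ⟨u • c, hlin.2.2 u c hc, ?_⟩
    apply monic_of_natDegree_le_of_coeff_eq_one (n - 1) (my_wordPoly_natDegree _)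
    rw [← hi, add_zero, my_wordPoly_coeff]
    exact hu
  | succ k ih =>
    rintro c hc i hi ⟨u, hu⟩
    have hlt : (i : ℕ) + 1 < n := by omega
    refine ih _ (hcyc c hc) ⟨i + 1, hlt⟩ (by simp; omega) ⟨θ u, ?_⟩
    have : (⟨(i : ℕ) + 1, hlt⟩ : Fin n) - 1 = i := by
      rw [sub_eq_iff_eq_add]
      apply Fin.ext
      rw [Fin.val_add, Fin.val_one', Nat.mod_eq_of_lt (a := 1) (by omega),
        Nat.mod_eq_of_lt hlt]
    unfold skewShift
    rw [this, ← map_mul, hu, map_one]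

/-- The full preimage of the code in the skew polynomial ring. -/
def my_pre {n : ℕ} [NeZero n] (D : Set (Fin n → A)) (hlin : IsLinearCode A D)
    (hcyc : ∀ c ∈ D, skewShift θ c ∈ D) : Submodule (Skew A θ) (Skew A θ) :=
  let P : AddSubgroup (Skew A θ) :=
    { carrier := {f | ∃ c ∈ D, f - ofPoly θ (wordPoly c) ∈ skewIdeal A θ n}
      zero_mem' := ⟨0, hlin.1, by
        have : wordPoly (0 : Fin n → A) = 0 := by simp [wordPoly]
        rw [this, my_ofPoly_zero, sub_zero]; exact Submodule.zero_mem _⟩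
      add_mem' := by
        rintro f g ⟨c, hc, hf⟩ ⟨d, hd, hg⟩
        refine ⟨c + d, hlin.2.1 c hc d hd, ?_⟩
        rw [my_wordPoly_add, my_ofPoly_add, add_sub_add_comm]
        exact Submodule.add_mem _ hf hg
      neg_mem' := by
        rintro f ⟨c, hc, hf⟩
        refine ⟨(-1 : A) • c, hlin.2.2 _ c hc, ?_⟩
        rw [my_wordPoly_smul, C_neg, C_1, neg_one_mul, my_ofPoly_neg]
        have : -f - -ofPoly θ (wordPoly c) = -(f - ofPoly θ (wordPoly c)) := by abel
        rw [this]
        exact Submodule.neg_mem _ hf }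
  { P with
    smul_mem' := by
      intro r f hf
      refine my_smul_induction θ P ?_ ?_ r f hf
      · rintro a f ⟨c, hc, hf⟩
        refine ⟨a • c, hlin.2.2 a c hc, ?_⟩
        rw [my_wordPoly_smul, my_ofPoly_L, ← mul_sub]
        exact Submodule.smul_mem _ _ hf
      · rintro f ⟨c, hc, hf⟩
        obtain ⟨a, ha⟩ := my_wordPoly_shift θ c
        refine ⟨_, hcyc c hc, ?_⟩
        have h1 : ofPoly θ (wordPoly (skewShift θ c)) = xSkew A θ * ofPoly θ (wordPoly c)
            - cSkew θ a * (xSkew A θ ^ n - 1) := by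
          rw [← my_ofPoly_T, ha, my_ofPoly_add, my_ofPoly_L, my_ofPoly_X_pow_sub_one,
            add_sub_cancel_right]
        rw [h1, ← sub_add, ← mul_sub]
        refine Submodule.add_mem _ (Submodule.smul_mem _ _ hf) (Submodule.smul_mem _ _ ?_)
        exact Submodule.subset_span rfl }

lemma my_mem_pre {n : ℕ} [NeZero n] (D : Set (Fin n → A)) (hlin : IsLinearCode A D)
    (hcyc : ∀ c ∈ D, skewShift θ c ∈ D) (f : Skew A θ) :
    f ∈ my_pre θ D hlin hcyc ↔ ∃ c ∈ D, f - ofPoly θ (wordPoly c) ∈ skewIdeal A θ n :=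
  Iff.rfl

/-- Polynomials over the residue ring whose double lies in a given left ideal. -/
def my_N {K : Type*} [CommRing K] (π : A →+* K)
    (M : Submodule (Skew A θ) (Skew A θ)) : AddSubgroup K[X] where
  carrier := {g | ∃ q : A[X], q.map π = g ∧ ofPoly θ (2 * q) ∈ M}
  zero_mem' := ⟨0, by simp, by rw [mul_zero, my_ofPoly_zero]; exact M.zero_mem⟩
  add_mem' := by
    rintro f g ⟨p, rfl, hp⟩ ⟨q, rfl, hq⟩
    refine ⟨p + q, by simp, ?_⟩
    rw [mul_add, my_ofPoly_add]
    exact M.add_mem hp hq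
  neg_mem' := by
    rintro f ⟨p, rfl, hp⟩
    refine ⟨-p, by simp, ?_⟩
    rw [mul_neg, my_ofPoly_neg]
    exact M.neg_mem hp

lemma my_N_L {K : Type*} [CommRing K] (π : A →+* K) (hπ : Function.Surjective π)
    (M : Submodule (Skew A θ) (Skew A θ)) (a : K) (f : K[X]) (hf : f ∈ my_N θ π M) :
    C a * f ∈ my_N θ π M := by
  obtain ⟨p, rfl, hp⟩ := hf
  obtain ⟨a, rfl⟩ := hπ a
  refine ⟨C a * p, by simp, ?_⟩
  rw [mul_left_comm, my_ofPoly_L]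
  exact M.smul_mem _ hp

lemma my_N_T {K : Type*} [CommRing K] (π : A →+* K) (θ2 : K →+* K)
    (hc : ∀ a, π (θ a) = θ2 (π a))
    (M : Submodule (Skew A θ) (Skew A θ)) (f : K[X]) (hf : f ∈ my_N θ π M) :
    f.map θ2 * X ∈ my_N θ π M := by
  obtain ⟨p, rfl, hp⟩ := hf
  refine ⟨p.map θ * X, ?_, ?_⟩
  · rw [Polynomial.map_mul, map_X, Polynomial.map_map, Polynomial.map_map]
    congr 2
    ext a; exact hc a
  · have : (2 : A[X]) * (p.map θ * X) = (2 * p).map θ * X := by simp [mul_assoc]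
    rw [this, my_ofPoly_T]
    exact M.smul_mem _ hp

/-- Doubling only sees the residue. -/
lemma my_N_lift {K : Type*} [CommRing K] (π : A →+* K) (h2 : ∀ a, π a = 0 → 2 * a = 0)
    (M : Submodule (Skew A θ) (Skew A θ)) (q : A[X]) (hf : q.map π ∈ my_N θ π M) :
    ofPoly θ (2 * q) ∈ M := by
  obtain ⟨p, hp, hM⟩ := hf
  have : 2 * q = 2 * p := by
    ext i
    have h3 : π (q.coeff i - p.coeff i) = 0 := by
      rw [map_sub, ← coeff_map, ← coeff_map, hp, sub_self]
    have := h2 _ h3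
    rw [mul_sub, sub_eq_zero] at this
    simpa [coeff_ofNat_mul] using this
  rwa [this]

theorem my_general {K : Type*} [CommRing K] [Nontrivial K] (π : A →+* K)
    (hπ : Function.Surjective π)
    (hK : ∀ a : K, a ≠ 0 → ∃ b, b * a = 1)
    (hker : ∀ a, π a = 0 → ∃ b, a = 2 * b) (h2 : ∀ a, π a = 0 → 2 * a = 0)
    (hunit : ∀ a, π a ≠ 0 → ∃ b, b * a = 1)
    (θ2 : K →+* K) (hc : ∀ a, π (θ a) = θ2 (π a))
    (s : ℕ) [NeZero s] (D : Set (Fin s → A)) (hlin : IsLinearCode A D)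
    (hcyc : ∀ c ∈ D, skewShift θ c ∈ D) (hno : ¬ ∃ c ∈ D, (wordPoly c).Monic) :
    ∃ q : A[X], RDvd (ofPoly θ2 (q.map π)) (xSkew K θ2 ^ s - 1) ∧
      wordToQuot θ '' D = ↑(Submodule.span (Skew A θ)
          {(Submodule.Quotient.mk (p := skewIdeal A θ s) (ofPoly θ (2 * q)))}) := by
  classical
  set P := my_pre θ D hlin hcyc with hP
  have hIP : skewIdeal A θ s ≤ P := by
    intro f hf
    refine ⟨0, hlin.1, ?_⟩
    have : wordPoly (0 : Fin s → A) = 0 := by simp [wordPoly]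
    rw [this, my_ofPoly_zero, sub_zero]; exact hf
  have hXI : ofPoly θ (2 * (X ^ s - 1)) ∈ skewIdeal A θ s := by
    have : (2 : A[X]) = C 2 := rfl
    rw [this, my_ofPoly_L, my_ofPoly_X_pow_sub_one]
    exact Submodule.smul_mem _ _ (Submodule.subset_span rfl)
  set J := my_N θ π P with hJ
  have hXJ : (X ^ s - 1 : K[X]) ∈ J := ⟨X ^ s - 1, by simp, hIP hXI⟩
  have hXm : (X ^ s - 1 : K[X]).Monic := by
    have := monic_X_pow_sub_C (1 : K) (NeZero.ne s)
    simpa using this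
  have hex : ∃ n : ℕ, ∃ g ∈ J, g.Monic ∧ g.natDegree = n := ⟨_, _, hXJ, hXm, rfl⟩
  obtain ⟨g, hgJ, hgm, hgd⟩ := Nat.find_spec hex
  have hmin : ∀ f ∈ J, f.Monic → g.natDegree ≤ f.natDegree := by
    intro f hf hfm
    rw [hgd]
    exact Nat.find_min' hex ⟨f, hf, hfm, rfl⟩
  obtain ⟨q, rfl, hqP⟩ := id hgJ
  have hJL := my_N_L θ π hπ P
  have hJT := my_N_T θ π θ2 hc P
  refine ⟨q, ?_, ?_⟩
  · let N : AddSubgroup K[X] :=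
      { carrier := {f | ∃ u : Skew K θ2, ofPoly θ2 f = u * ofPoly θ2 (q.map π)}
        zero_mem' := ⟨0, by rw [my_ofPoly_zero, zero_mul]⟩
        add_mem' := by
          rintro f g ⟨u, hu⟩ ⟨v, hv⟩
          exact ⟨u + v, by rw [my_ofPoly_add, hu, hv, add_mul]⟩
        neg_mem' := by
          rintro f ⟨u, hu⟩
          exact ⟨-u, by rw [my_ofPoly_neg, hu, neg_mul]⟩ }
    have hJN : J ≤ N := by
      refine my_division θ2 hK J N hJL hJT ?_ ?_ _ hgJ hgm ⟨1, (one_mul _).symm⟩ hmin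
      · rintro a f ⟨u, hu⟩
        exact ⟨cSkew θ2 a * u, by rw [my_ofPoly_L, hu, mul_assoc]⟩
      · rintro f ⟨u, hu⟩
        exact ⟨xSkew K θ2 * u, by rw [my_ofPoly_T, hu, mul_assoc]⟩
    obtain ⟨u, hu⟩ := hJN hXJ
    exact ⟨u, by rw [← my_ofPoly_X_pow_sub_one, hu]⟩
  · set M := Submodule.span (Skew A θ) {ofPoly θ (2 * q)} with hM
    have hJM : J ≤ my_N θ π M :=
      my_division θ2 hK J _ hJL hJT (my_N_L θ π hπ M) (my_N_T θ π θ2 hc M) _ hgJ hgm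
        ⟨q, rfl, Submodule.subset_span rfl⟩ hmin
    have hspan : Submodule.span (Skew A θ)
          {(Submodule.Quotient.mk (p := skewIdeal A θ s) (ofPoly θ (2 * q)))}
        = M.map (skewIdeal A θ s).mkQ := by
      rw [hM, Submodule.map_span, Set.image_singleton]; rfl
    rw [hspan]
    apply Set.Subset.antisymm
    · rintro _ ⟨c, hcD, rfl⟩
      have hci : ∀ i, ∃ b, c i = 2 * b := by
        intro i
        apply hker
        by_contra hne
        exact my_top_unit θ D hlin hcyc hno (s - 1 - i) c hcD i (by omega) (hunit _ hne)
      choose d hd using hci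
      have hw : wordPoly c = 2 * wordPoly d := by
        have : c = (2 : A) • d := by ext i; simp [hd]
        rw [this, my_wordPoly_smul]; rfl
      refine ⟨ofPoly θ (wordPoly c), ?_, rfl⟩
      rw [hw]
      refine my_N_lift θ π h2 M _ (hJM ⟨_, rfl, ?_⟩)
      rw [← hw]
      exact ⟨c, hcD, by rw [sub_self]; exact Submodule.zero_mem _⟩
    · rintro _ ⟨f, hf, rfl⟩
      have hMP : M ≤ P := by
        rw [hM, Submodule.span_le, Set.singleton_subset_iff]; exact hqP
      obtain ⟨c, hcD, hfc⟩ := hMP hf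
      refine ⟨c, hcD, ?_⟩
      exact ((Submodule.Quotient.eq _).2 hfc).symm

end General

/-! ### The Galois ring -/

lemma my_bar_surj : Function.Surjective bar := ZMod.ringHom_surjective bar

lemma my_bar_ker (a : Z4) (ha : bar a = 0) : ∃ b, a = 2 * b := by
  revert a; decide

lemma my_poly_ker (p : Z4[X]) (hp : p.map bar = 0) : ∃ t : Z4[X], p = 2 * t := by
  have h1 : ∀ i, ∃ b, p.coeff i = 2 * b := fun i => my_bar_ker _ (by
    rw [← coeff_map, hp, coeff_zero])
  have : (C (2 : Z4)) ∣ p := C_dvd_iff_dvd_coeff _ _ |>.2 (fun i => h1 i)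
  exact this

lemma my_barR_mk (h p : Z4[X]) :
    barR h (Ideal.Quotient.mk _ p) = Ideal.Quotient.mk _ (p.map bar) := rfl

lemma my_barR_surj (h : Z4[X]) : Function.Surjective (barR h) := by
  intro a
  obtain ⟨p, rfl⟩ := Ideal.Quotient.mk_surjective a
  obtain ⟨q, rfl⟩ := Polynomial.map_surjective bar my_bar_surj p
  exact ⟨Ideal.Quotient.mk _ q, rfl⟩

lemma my_barR_ker (h : Z4[X]) (a : R4 h) (ha : barR h a = 0) : ∃ b, a = 2 * b := by
  obtain ⟨p, rfl⟩ := Ideal.Quotient.mk_surjective a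
  rw [my_barR_mk, Ideal.Quotient.eq_zero_iff_mem, Ideal.mem_span_singleton] at ha
  obtain ⟨r, hr⟩ := ha
  obtain ⟨r, rfl⟩ := Polynomial.map_surjective bar my_bar_surj r
  obtain ⟨t, ht⟩ := my_poly_ker (p - h * r) (by
    rw [Polynomial.map_sub, Polynomial.map_mul, hr, sub_self])
  refine ⟨Ideal.Quotient.mk _ t, ?_⟩
  have h2 : (2 : R4 h) = Ideal.Quotient.mk _ (2 : Z4[X]) := by rw [map_ofNat]
  rw [h2, ← map_mul, Ideal.Quotient.eq, Ideal.mem_span_singleton]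
  exact ⟨r, by rw [← ht]; ring⟩

lemma my_four (h : Z4[X]) : (4 : R4 h) = 0 := by
  have h1 : (4 : Z4) = 0 := by decide
  have h2 : (4 : R4 h) = Ideal.Quotient.mk _ (C (4 : Z4)) := by
    rw [show (C (4 : Z4) : Z4[X]) = 4 from rfl, map_ofNat]
  rw [h2, h1, C_0, map_zero]

lemma my_rep2_mk (h p : Z4[X]) (hm : h.Monic) :
    rep2 h (Ideal.Quotient.mk _ (p.map bar)) = (p %ₘ h).map bar := by
  rw [Polynomial.map_modByMonic _ hm]
  unfold rep2
  apply modByMonic_eq_of_dvd_sub (hm.map bar)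
  rw [← Ideal.mem_span_singleton, ← Ideal.Quotient.eq]
  exact Quotient.out_eq _

lemma my_theta (h : Z4[X]) (hm : h.Monic) (a : R4 h) :
    barR h (thetaFun4 h a) = thetaFun2 h (barR h a) := by
  have h1 : rep2 h (barR h a) = (rep4 h a).map bar := by
    have : barR h a = Ideal.Quotient.mk _ ((Quotient.out a).map bar) := by
      rw [← my_barR_mk]; congr 1; exact (Quotient.out_eq _).symm
    rw [this, my_rep2_mk h _ hm]; rfl
  unfold thetaFun4 thetaFun2
  rw [h1]
  have hx : barR h (xi h) = xibar h := by
    unfold xi xibar; rw [my_barR_mk, map_X]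
  rw [aeval_def, aeval_def, hom_eval₂, eval₂_map, map_pow, hx]
  congr 1
  exact RingHom.ext_zmod _ _

/-- A skew cyclic code of length `s` over `R₄` containing no monic
skew polynomial is generated by `2q(x)` where `q̄(x)` is a right divisor of `x^s-1`
in `R₂[x,θ₂]`. -/
theorem skew_cyclic_no_monic_generator
    (m : ℕ) (hm : 1 ≤ m) (h : Z4[X]) (hbp : BasicPrimitive h m)
    (θ4 : R4 h →+* R4 h) (hθ4 : ⇑θ4 = thetaFun4 h)
    (θ2 : R2 h →+* R2 h) (hθ2 : ⇑θ2 = thetaFun2 h)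
    (s : ℕ) [NeZero s]
    (C : Set (Fin s → R4 h)) (hlin : IsLinearCode (R4 h) C)
    (hcyc : ∀ c ∈ C, skewShift θ4 c ∈ C)
    (hnomonic : ¬ ∃ c ∈ C, (wordPoly c).Monic) :
    ∃ q : Polynomial (R4 h),
      RDvd (ofPoly θ2 (q.map (barR h))) (xSkew (R2 h) θ2 ^ s - 1) ∧
      wordToQuot θ4 '' C =
        ↑(Submodule.span (Skew (R4 h) θ4)
          {(Submodule.Quotient.mk (p := skewIdeal (R4 h) θ4 s) (ofPoly θ4 (2 * q)))}) := by
  obtain ⟨hmon, hdeg, hirr, -⟩ := hbp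
  have hmax : (Ideal.span {h.map bar}).IsMaximal :=
    PrincipalIdealRing.isMaximal_of_irreducible hirr
  have hnt : Nontrivial (R2 h) := Ideal.Quotient.nontrivial_iff.2 hmax.ne_top
  have hK : ∀ a : R2 h, a ≠ 0 → ∃ b, b * a = 1 := by
    intro a ha
    obtain ⟨b, hb⟩ := Ideal.Quotient.exists_inv (I := Ideal.span {h.map bar}) ha
    exact ⟨b, by rw [mul_comm]; exact hb⟩
  have h4 := my_four h
  refine my_general θ4 (barR h) (my_barR_surj h) hK (my_barR_ker h) ?_ ?_ θ2 ?_ s C hlin hcyc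
    hnomonic
  · intro a ha
    obtain ⟨b, rfl⟩ := my_barR_ker h a ha
    linear_combination b * h4
  · intro a ha
    obtain ⟨b, hb⟩ := hK _ ha
    obtain ⟨b, rfl⟩ := my_barR_surj h b
    obtain ⟨c, hc⟩ := my_barR_ker h (b * a - 1) (by rw [map_sub, map_mul, hb, map_one, sub_self])
    refine ⟨(1 - 2 * c) * b, ?_⟩
    linear_combination (1 - 2 * c) * hc - c ^ 2 * h4
  · intro a
    rw [hθ4, hθ2]
    exact my_theta h hmon a
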